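/- arXiv:2412.07081 — 3 statements merged into one kernel-verified Lean document; each statement's English description precedes it below -/
import Mathlib

section
/- Let C, D, M be real numbers with C > 1, D > 0, and M ≥ D², and let I ≥ 2 be an integer. Then (M·C + (I−1)·D²) / (C²·I·D²) − C^{−I} ≥ (C − 1) / (2·C³). -/
/-!
Since `M ≥ D²`, the fraction is at least `(C + I - 1) / (C² I) = 1/C² + (C - 1)/(C² I)`.
For `I = 2` the term `1/C²` cancels `C^{-I}`, leaving `(C - 1)/(2C²) ≥ (C - 1)/(2C³)`.
For `I ≥ 3` one has `C^{-I} ≤ 1/C³`, and already `1/C² - 1/C³ = (C - 1)/C³` suffices.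
-/

/-- Elementary uniform-in-`I` lower bound: for `C > 1`, `D > 0`, `M ≥ D²` and any
integer `I ≥ 2`, `(M·C + (I−1)·D²)/(C²·I·D²) − C^{−I} ≥ (C − 1)/(2·C³)`. -/
theorem bracket_lower_bound (C D M : ℝ) (hC : 1 < C) (hD : 0 < D) (hM : D ^ 2 ≤ M)
    (I : ℕ) (hI : 2 ≤ I) :
    (C - 1) / (2 * C ^ 3)
      ≤ (M * C + ((I : ℝ) - 1) * D ^ 2) / (C ^ 2 * I * D ^ 2) - (C ^ I)⁻¹ := by
  have hC0 : 0 < C := by linarith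
  have hC1 : 0 < C - 1 := by linarith
  have hI0 : (0 : ℝ) < I := by
    exact_mod_cast (by omega : 0 < I)
  have hfrac : 1 / C ^ 2 + (C - 1) / (C ^ 2 * I)
      ≤ (M * C + ((I : ℝ) - 1) * D ^ 2) / (C ^ 2 * I * D ^ 2) := by
    have heq : 1 / C ^ 2 + (C - 1) / (C ^ 2 * I)
        = (D ^ 2 * C + ((I : ℝ) - 1) * D ^ 2) / (C ^ 2 * I * D ^ 2) := by
      field_simp
      ring
    rw [heq]
    gcongr
  rcases hI.eq_or_lt with rfl | hI3
  · have hlast : (C - 1) / (2 * C ^ 3) ≤ (C - 1) / (C ^ 2 * (2 : ℕ)) := by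
      apply div_le_div_of_nonneg_left hC1.le (by positivity)
      push_cast
      nlinarith [mul_pos (pow_pos hC0 2) hC1]
    rw [one_div] at hfrac
    linarith
  · have hpow : (C ^ I)⁻¹ ≤ (C ^ 3)⁻¹ :=
      inv_anti₀ (by positivity) (pow_le_pow_right₀ hC.le hI3)
    have hpos : 0 ≤ (C - 1) / (C ^ 2 * I) := by positivity
    have hdiff : 1 / C ^ 2 - (C ^ 3)⁻¹ = 2 * ((C - 1) / (2 * C ^ 3)) := by
      field_simp
    have hnonneg : 0 ≤ (C - 1) / (2 * C ^ 3) := by positivity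
    linarith
end

section
/- Let (Ω, 𝒜, μ) be a probability space and Y : Ω → ℝ measurable with ∫ Y⁴ dμ < ∞, σ² := Var_μ(Y) > 0, and μ₄ := ∫ (Y − ∫ Y dμ)⁴ dμ. For an integer I ≥ 1, define Z_I : Ω^I → ℝ by Z_I(x) := Σ_{i=1}^I Y(x_i), so that Var_{μ^⊗I}(Z_I) = I·σ². For an integer K ≥ 3, let V_{I,K} be the unbiased sample variance of K i.i.d. copies of Z_I, i.e., on ((Ω^I)^K, (μ^⊗I)^⊗K), V_{I,K}(z) := (1/(K−1)) Σ_{k=1}^K (Z_I(z_k) − (1/K) Σ_{j=1}^K Z_I(z_j))². Then the relative error of this estimator of Var(Z_I) satisfies sqrt(Var(V_{I,K})) / (I·σ²) ≤ sqrt( (μ₄/σ⁴ + 3) / K ), a bound independent of I. -/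
/-!
The sample variance is invariant under centering, so let `W` denote a centered copy of the
sampled variable, with moments `0, s, t, m` of orders one to four. With `S = ∑ W_k` and
`Q = ∑ W_k²` over `K` independent copies, `(K - 1) V = Q - S² / K`, so `Var V` is determined by the
joint moments of `S` and `Q` of total degree at most four. Adding one independent copy
replaces `(S, Q)` by `(w + S, w² + Q)`, which gives all these moments by induction
(`hasInt_moments`) and hence the classical formula
`Var V = m / K - s² (K - 3) / (K (K - 1)) ≤ m / K` for `K ≥ 3` (`variance_sample`).

Here `W` is itself a sum of `I` independent copies of `Y - 𝔼 Y`, so the same induction gives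
`s = I σ²` and `m = I μ₄ + 3 I (I - 1) σ⁴`. Since `I ≥ 1`, `m / s² ≤ μ₄ / σ⁴ + 3`.
-/

open MeasureTheory ProbabilityTheory

/-- `f` is integrable with integral `c`. -/
def HasInt {α : Type*} [MeasurableSpace α] (f : α → ℝ) (ν : Measure α) (c : ℝ) : Prop :=
  Integrable f ν ∧ ∫ x, f x ∂ν = c

namespace HasInt

variable {α β : Type*} [MeasurableSpace α] [MeasurableSpace β] {ν : Measure α} {ρ : Measure β}

lemma add {f g : α → ℝ} {a b : ℝ} (hf : HasInt f ν a) (hg : HasInt g ν b) :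
    HasInt (fun x => f x + g x) ν (a + b) :=
  ⟨hf.1.add hg.1, by rw [integral_add hf.1 hg.1, hf.2, hg.2]⟩

lemma smul {f : α → ℝ} {a : ℝ} (c : ℝ) (hf : HasInt f ν a) :
    HasInt (fun x => c * f x) ν (c * a) :=
  ⟨hf.1.const_mul c, by rw [integral_const_mul, hf.2]⟩

lemma mul [SFinite ν] [SFinite ρ] {f : α → ℝ} {g : β → ℝ} {a b : ℝ}
    (hf : HasInt f ν a) (hg : HasInt g ρ b) :
    HasInt (fun p : α × β => f p.1 * g p.2) (ν.prod ρ) (a * b) :=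
  ⟨hf.1.mul_prod hg.1, by rw [integral_prod_mul, hf.2, hg.2]⟩

lemma one [IsProbabilityMeasure ν] : HasInt (fun _ => (1 : ℝ)) ν 1 :=
  ⟨integrable_const _, by simp⟩

lemma congr {f g : α → ℝ} {a b : ℝ} (hf : HasInt f ν a) (h : ∀ x, g x = f x) (hab : b = a) :
    HasInt g ν b := by
  obtain rfl : g = f := funext h
  exact hab ▸ hf

/-- Transfer along `Ω^(n+1) ≃ Ω × Ω^n`. -/
lemma pi_succ {Ω : Type*} [MeasurableSpace Ω] {μ : Measure Ω} [IsProbabilityMeasure μ] {n : ℕ}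
    {F : Ω × (Fin n → Ω) → ℝ} {c : ℝ} (h : HasInt F (μ.prod (Measure.pi fun _ => μ)) c) :
    HasInt (fun x : Fin (n + 1) → Ω => F (x 0, fun j => x j.succ)) (Measure.pi fun _ => μ) c := by
  have mp := measurePreserving_piFinSuccAbove (fun _ : Fin (n + 1) => μ) 0
  refine ⟨(mp.integrable_comp_emb (MeasurableEquiv.measurableEmbedding _)).2 h.1, ?_⟩
  rw [← h.2]
  exact mp.integral_comp (MeasurableEquiv.measurableEmbedding _) F

end HasInt

/-- Joint moments of `S = ∑ W (x i)` and `Q = ∑ W (x i) ^ 2` of weighted degree at most four,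
for i.i.d. centered summands. -/
lemma hasInt_moments {Ω : Type*} [MeasurableSpace Ω] {μ : Measure Ω} [IsProbabilityMeasure μ]
    {W : Ω → ℝ} {s t m : ℝ} (h1 : HasInt W μ 0) (h2 : HasInt (fun x => W x ^ 2) μ s)
    (h3 : HasInt (fun x => W x ^ 3) μ t) (h4 : HasInt (fun x => W x ^ 4) μ m) (n : ℕ) :
    let P : Measure (Fin n → Ω) := Measure.pi fun _ => μ
    let S : (Fin n → Ω) → ℝ := fun x => ∑ i, W (x i)
    let Q : (Fin n → Ω) → ℝ := fun x => ∑ i, W (x i) ^ 2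
    HasInt S P 0 ∧ HasInt (fun x => S x ^ 2) P (n * s) ∧ HasInt (fun x => S x ^ 3) P (n * t) ∧
    HasInt (fun x => S x ^ 4) P (n * m + 3 * n * (n - 1) * s ^ 2) ∧
    HasInt Q P (n * s) ∧ HasInt (fun x => Q x * S x) P (n * t) ∧
    HasInt (fun x => Q x * S x ^ 2) P (n * m + n * (n - 1) * s ^ 2) ∧
    HasInt (fun x => Q x ^ 2) P (n * m + n * (n - 1) * s ^ 2) := by
  induction n with
  | zero => simp [HasInt]
  | succ n ih =>
    obtain ⟨iS, iS2, iS3, iS4, iQ, iQS, iQS2, iQ2⟩ := ih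
    have o := HasInt.one (ν := μ)
    have o' := HasInt.one (ν := (Measure.pi fun _ : Fin n => μ))
    refine ⟨?_, ?_, ?_, ?_, ?_, ?_, ?_, ?_⟩
    · exact ((h1.mul o').add (o.mul iS)).pi_succ.congr
        (fun x => by simp only [Fin.sum_univ_succ]; ring) (by ring)
    · exact (((h2.mul o').add ((h1.mul iS).smul 2)).add (o.mul iS2)).pi_succ.congr
        (fun x => by simp only [Fin.sum_univ_succ]; ring) (by push_cast; ring)
    · exact ((((h3.mul o').add ((h2.mul iS).smul 3)).add ((h1.mul iS2).smul 3)).add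
        (o.mul iS3)).pi_succ.congr
        (fun x => by simp only [Fin.sum_univ_succ]; ring) (by push_cast; ring)
    · exact (((((h4.mul o').add ((h3.mul iS).smul 4)).add ((h2.mul iS2).smul 6)).add
        ((h1.mul iS3).smul 4)).add (o.mul iS4)).pi_succ.congr
        (fun x => by simp only [Fin.sum_univ_succ]; ring) (by push_cast; ring)
    · exact ((h2.mul o').add (o.mul iQ)).pi_succ.congr
        (fun x => by simp only [Fin.sum_univ_succ]; ring) (by push_cast; ring)
    · exact ((((h3.mul o').add (h2.mul iS)).add (h1.mul iQ)).add (o.mul iQS)).pi_succ.congr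
        (fun x => by simp only [Fin.sum_univ_succ]; ring) (by push_cast; ring)
    · exact ((((((h4.mul o').add ((h3.mul iS).smul 2)).add (h2.mul iS2)).add (h2.mul iQ)).add
        ((h1.mul iQS).smul 2)).add (o.mul iQS2)).pi_succ.congr
        (fun x => by simp only [Fin.sum_univ_succ]; ring) (by push_cast; ring)
    · exact (((h4.mul o').add ((h2.mul iQ).smul 2)).add (o.mul iQ2)).pi_succ.congr
        (fun x => by simp only [Fin.sum_univ_succ]; ring) (by push_cast; ring)

lemma sum_sub_mean_sq {K : ℕ} (hK : K ≠ 0) (w : Fin K → ℝ) (c : ℝ) :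
    ∑ k, ((w k + c) - (K : ℝ)⁻¹ * ∑ j, (w j + c)) ^ 2
      = ∑ k, w k ^ 2 - (K : ℝ)⁻¹ * (∑ k, w k) ^ 2 := by
  have hK' : (K : ℝ) ≠ 0 := by exact_mod_cast hK
  have h : ∀ k, ((w k + c) - (K : ℝ)⁻¹ * ∑ j, (w j + c)) ^ 2
      = w k ^ 2 - 2 * ((K : ℝ)⁻¹ * ∑ j, w j) * w k + ((K : ℝ)⁻¹ * ∑ j, w j) ^ 2 := by
    intro k
    simp only [Finset.sum_add_distrib, Finset.sum_const, Finset.card_univ, Fintype.card_fin,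
      nsmul_eq_mul]
    field_simp
    ring
  rw [Finset.sum_congr rfl fun k _ => h k]
  simp only [Finset.sum_add_distrib, Finset.sum_sub_distrib, ← Finset.mul_sum,
    Finset.sum_const, Finset.card_univ, Fintype.card_fin, nsmul_eq_mul]
  field_simp
  ring

/-- The variance of the unbiased sample variance of `K` i.i.d. copies of `W + c`, where `W` is
centered. -/
lemma variance_sample {Ω : Type*} [MeasurableSpace Ω] {μ : Measure Ω} [IsProbabilityMeasure μ]
    {W : Ω → ℝ} {s t m : ℝ} (h1 : HasInt W μ 0) (h2 : HasInt (fun x => W x ^ 2) μ s)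
    (h3 : HasInt (fun x => W x ^ 3) μ t) (h4 : HasInt (fun x => W x ^ 4) μ m)
    {K : ℕ} (hK : 2 ≤ K) (c : ℝ) :
    variance (fun z : Fin K → Ω => ((K : ℝ) - 1)⁻¹ *
        ∑ k, ((W (z k) + c) - (K : ℝ)⁻¹ * ∑ j, (W (z j) + c)) ^ 2) (Measure.pi fun _ => μ)
      = m / K - s ^ 2 * (K - 3) / (K * (K - 1)) := by
  obtain ⟨-, iS2, -, iS4, iQ, -, iQS2, iQ2⟩ := hasInt_moments h1 h2 h3 h4 K
  have hK2 : (2 : ℝ) ≤ K := by exact_mod_cast hK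
  have hK0 : (K : ℝ) ≠ 0 := by linarith
  have hK1 : (K : ℝ) - 1 ≠ 0 := by linarith
  simp only [fun z : Fin K → Ω => sum_sub_mean_sq (by omega) (fun k => W (z k)) c]
  have e1 := (iQ.add (iS2.smul (-(K : ℝ)⁻¹))).smul ((K : ℝ) - 1)⁻¹
  have e2 := ((iQ2.add (iQS2.smul (-2 * (K : ℝ)⁻¹))).add (iS4.smul ((K : ℝ)⁻¹ ^ 2))).smul
    (((K : ℝ) - 1)⁻¹ ^ 2)
  replace e1 := e1.congr (g := fun z : Fin K → Ω => ((K : ℝ) - 1)⁻¹ *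
    (∑ k, W (z k) ^ 2 - (K : ℝ)⁻¹ * (∑ k, W (z k)) ^ 2)) (fun z => by ring) rfl
  replace e2 := e2.congr (g := fun z : Fin K → Ω => (((K : ℝ) - 1)⁻¹ *
    (∑ k, W (z k) ^ 2 - (K : ℝ)⁻¹ * (∑ k, W (z k)) ^ 2)) ^ 2) (fun z => by ring) rfl
  rw [variance_eq_sub ((memLp_two_iff_integrable_sq e1.1.1).2 e2.1)]
  simp only [Pi.pow_apply]
  rw [e1.2, e2.2]
  field_simp
  ring

lemma integrable_centered_pow {Ω : Type*} [MeasurableSpace Ω] {μ : Measure Ω}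
    [IsProbabilityMeasure μ] {Y : Ω → ℝ} (hY : Measurable Y)
    (hY4 : Integrable (fun x => Y x ^ 4) μ) (c : ℝ) {k : ℕ} (hk : k ≤ 4) :
    Integrable (fun x => (Y x - c) ^ k) μ := by
  refine ((hY4.add (integrable_const (c ^ 4))).const_mul 8 |>.add (integrable_const 1)).mono'
    (by fun_prop) (Filter.Eventually.of_forall fun x => ?_)
  simp only [Pi.add_apply, Real.norm_eq_abs, abs_pow]
  have h8 : |Y x - c| ^ 4 ≤ 8 * (Y x ^ 4 + c ^ 4) := by
    rw [(by decide : Even 4).pow_abs]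
    nlinarith [sq_nonneg (Y x + c), sq_nonneg (Y x ^ 2 - c ^ 2), sq_nonneg ((Y x + c) ^ 2),
      sq_nonneg (Y x - c), mul_nonneg (sq_nonneg (Y x + c)) (sq_nonneg (Y x - c)),
      mul_nonneg (sq_nonneg (Y x + c)) (add_nonneg (sq_nonneg (Y x)) (sq_nonneg c))]
  rcases le_total |Y x - c| 1 with h | h
  · have := pow_le_one₀ (n := k) (abs_nonneg _) h
    have : 0 ≤ |Y x - c| ^ 4 := by positivity
    linarith
  · have := pow_le_pow_right₀ h hk
    linarith

/-- Dimension-independent relative error of the log-variance estimator: with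
`σ² = Var(Y) > 0`, `μ₄ = ∫ (Y − ∫Y)⁴ dμ`, `Z_I x = ∑ i, Y (x i)` on `Ω^I` (so that
`Var(Z_I) = I·σ²`), and `V_{I,K}` the unbiased sample variance of `K ≥ 3` i.i.d. copies
of `Z_I`, the relative error satisfies
`sqrt(Var(V_{I,K})) / (I·σ²) ≤ sqrt((μ₄/σ⁴ + 3)/K)`, a bound independent of `I`. -/
theorem lv_estimator_relative_error_bound {Ω : Type*} [MeasurableSpace Ω]
    (μ : Measure Ω) [IsProbabilityMeasure μ] (Y : Ω → ℝ) (hY : Measurable Y)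
    (hY4 : Integrable (fun x => Y x ^ 4) μ) (hσ : 0 < variance Y μ)
    (I : ℕ) (hI : 1 ≤ I) (K : ℕ) (hK : 3 ≤ K) :
    variance (fun x : Fin I → Ω => ∑ i, Y (x i)) (Measure.pi fun _ : Fin I => μ)
      = I * variance Y μ ∧
    Real.sqrt
        (variance
          (fun z : Fin K → Fin I → Ω =>
            ((K : ℝ) - 1)⁻¹ *
              ∑ k, ((∑ i, Y (z k i)) - (K : ℝ)⁻¹ * ∑ j, ∑ i, Y (z j i)) ^ 2)
          (Measure.pi fun _ : Fin K => Measure.pi fun _ : Fin I => μ))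
        / ((I : ℝ) * variance Y μ)
      ≤ Real.sqrt
          (((∫ y, (Y y - ∫ z, Y z ∂μ) ^ 4 ∂μ) / variance Y μ ^ 2 + 3) / K) := by
  have hL2 : MemLp Y 2 μ := memLp_two_of_variance_ne_zero hY.aestronglyMeasurable hσ.ne'
  constructor
  · have h := variance_sum_pi (μ := fun _ : Fin I => μ) (X := fun _ => Y) (fun _ => hL2)
    simp only [Finset.sum_const, Finset.card_univ, Fintype.card_fin, nsmul_eq_mul] at h
    rw [← h]
    congr 1
    ext x
    simp
  · set e := ∫ z, Y z ∂μ with he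
    set m := ∫ y, (Y y - e) ^ 4 ∂μ with hm
    have hi : Integrable Y μ := hL2.integrable (by norm_num)
    have h1 : HasInt (fun x => Y x - e) μ 0 :=
      ⟨hi.sub (integrable_const _), by
        rw [integral_sub hi (integrable_const _)]; simp [he]⟩
    have h2 : HasInt (fun x => (Y x - e) ^ 2) μ (variance Y μ) :=
      ⟨integrable_centered_pow hY hY4 e (by norm_num),
        (variance_eq_integral hY.aemeasurable).symm⟩
    have h3 : HasInt (fun x => (Y x - e) ^ 3) μ _ :=
      ⟨integrable_centered_pow hY hY4 e (by norm_num), rfl⟩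
    have h4 : HasInt (fun x => (Y x - e) ^ 4) μ m :=
      ⟨integrable_centered_pow hY hY4 e le_rfl, rfl⟩
    obtain ⟨iS, iS2, iS3, iS4, -⟩ := hasInt_moments h1 h2 h3 h4 I
    have hV := variance_sample iS iS2 iS3 iS4 (K := K) (by omega) (I * e)
    have hZ : ∀ x : Fin I → Ω, ∑ i, (Y (x i) - e) + I * e = ∑ i, Y (x i) := by
      intro x
      simp [Finset.sum_sub_distrib]
    simp only [hZ] at hV
    rw [hV]
    have hK3 : (3 : ℝ) ≤ K := by exact_mod_cast hK
    have hI1 : (1 : ℝ) ≤ I := by exact_mod_cast hI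
    have hs : 0 < (I : ℝ) * variance Y μ := by positivity
    have hm0 : 0 ≤ m := integral_nonneg fun x => by positivity
    generalize variance Y μ = v at *
    rw [← Real.sqrt_sq hs.le, ← Real.sqrt_div' _ (sq_nonneg _), Real.sqrt_sq hs.le]
    apply Real.sqrt_le_sqrt
    rw [div_le_iff₀ (by positivity)]
    have hA : 0 ≤ (I * v) ^ 2 * ((K : ℝ) - 3) / (K * (K - 1)) :=
      div_nonneg (mul_nonneg (sq_nonneg _) (by linarith))
        (mul_nonneg (by linarith) (by linarith))
    have hB : (m / v ^ 2 + 3) / K * (I * v) ^ 2 = (I ^ 2 * m + 3 * I ^ 2 * v ^ 2) / K := by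
      field_simp
    rw [hB]
    have hC : (I * m + 3 * I * (I - 1) * v ^ 2) / K ≤ (I ^ 2 * m + 3 * I ^ 2 * v ^ 2) / K := by
      gcongr ?_ / _
      have : (I : ℝ) * m ≤ I ^ 2 * m := by
        gcongr
        nlinarith
      have : 0 ≤ 3 * (I : ℝ) * v ^ 2 := by positivity
      linarith
    linarith
end

section
/- Let (E, ℰ, λ) be a σ-finite measure space and N ≥ 1 an integer. Let π_0, …, π_N : E → ℝ be strictly positive measurable functions with ∫ π_n dλ = 1 for all n. For n = 1, …, N let p_n, q_n : E × E → ℝ be measurable and strictly positive, with ∫_E p_n(y | x) dλ(y) = 1 for every x ∈ E and ∫_E q_n(x | y) dλ(x) = 1 for every y ∈ E. Define the incremental weights w_n(x_{n−1}, x_n) := π_n(x_n)·q_n(x_{n−1} | x_n) / (π_{n−1}(x_{n−1})·p_n(x_n | x_{n−1})). Then for every bounded measurable φ : E → ℝ, ∫_{E^{N+1}} φ(x_N) · (∏_{n=1}^N w_n(x_{n−1}, x_n)) · π_0(x_0) · ∏_{n=1}^N p_n(x_n | x_{n−1}) dλ^{⊗(N+1)}(x_0, …, x_N) = ∫_E φ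 · π_N dλ. -/
open MeasureTheory

/-!
The incremental weights cancel the forward kernels and telescope in the densities `π n`, so the
integrand is `φ(x_N) π_N(x_N) ∏ q_n(x_{n-1} | x_n)` (`ais_telescope`). Integrating out
`x_0, …, x_{N-1}` in this order, each backward kernel contributes a factor `1`
(`backward_chain`), which leaves `∫ φ π_N`. Integrability, needed for Fubini, is carried through
the same induction, since the kernels are positive and have total mass one.
-/

/-- A chain of backward probability kernels integrates out: the joint density
`g(x_N) ∏ q_n(x_{n-1} | x_n)` is integrable with the same integral as `g`. The induction removes
the coordinate `x_0`, which occurs only in the first kernel. -/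
lemma backward_chain {E : Type*} [MeasurableSpace E] (lam : Measure E) [SigmaFinite lam]
    (g : E → ℝ) (hgm : Measurable g) (hg : Integrable g lam) (N : ℕ)
    (q : Fin N → E → E → ℝ)
    (hqm : ∀ n, Measurable fun z : E × E => q n z.1 z.2)
    (hqpos : ∀ n x y, 0 < q n x y)
    (hq1 : ∀ n y, ∫ x, q n x y ∂lam = 1) :
    Integrable (fun x : Fin (N + 1) → E =>
        g (x (Fin.last N)) * ∏ n : Fin N, q n (x n.castSucc) (x n.succ))
      (Measure.pi fun _ => lam) ∧
    ∫ x : Fin (N + 1) → E,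
        g (x (Fin.last N)) * ∏ n : Fin N, q n (x n.castSucc) (x n.succ)
      ∂(Measure.pi fun _ => lam) = ∫ y, g y ∂lam := by
  induction N with
  | zero =>
    have hmp := measurePreserving_funUnique lam (Fin 1)
    have hemb := (MeasurableEquiv.funUnique (Fin 1) E).measurableEmbedding
    have hfun : (fun x : Fin (0 + 1) → E =>
        g (x (Fin.last 0)) * ∏ n : Fin 0, q n (x n.castSucc) (x n.succ))
        = g ∘ MeasurableEquiv.funUnique (Fin 1) E := by
      funext x
      simp [MeasurableEquiv.funUnique]
    rw [hfun]
    exact ⟨(hmp.integrable_comp_emb hemb).2 hg, hmp.integral_comp hemb g⟩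
  | succ N ih =>
    obtain ⟨ihI, ihE⟩ := ih (fun n => q n.succ) (fun n => hqm _) (fun n => hqpos _)
      (fun n => hq1 _)
    set G : (Fin (N + 1) → E) → ℝ := fun x =>
      g (x (Fin.last N)) * ∏ n : Fin N, q n.succ (x n.castSucc) (x n.succ) with hG
    set F : (Fin (N + 1 + 1) → E) → ℝ := fun x =>
      g (x (Fin.last (N + 1))) * ∏ n : Fin (N + 1), q n (x n.castSucc) (x n.succ) with hF
    have hmp := (measurePreserving_piFinSuccAbove (fun _ : Fin (N + 1 + 1) => lam) 0).symm
    set e := (MeasurableEquiv.piFinSuccAbove (fun _ : Fin (N + 1 + 1) => E) 0).symm with he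
    have hFe : F ∘ e = fun z : E × (Fin (N + 1) → E) => q 0 z.1 (z.2 0) * G z.2 := by
      funext z
      have hez : e z = Fin.cons z.1 z.2 := by
        simp [he, MeasurableEquiv.piFinSuccAbove_symm_apply, Fin.insertNthEquiv]
      simp only [Function.comp_apply, hez, hF, hG, Fin.prod_univ_succ, Fin.castSucc_zero,
        ← Fin.succ_castSucc, ← Fin.succ_last, Fin.cons_zero, Fin.cons_succ]
      ring
    have hGm : Measurable G := by
      refine (hgm.comp (measurable_pi_apply _)).mul (Finset.measurable_fun_prod _ fun n _ => ?_)
      have hpair : Measurable fun x : Fin (N + 1) → E => (x n.castSucc, x n.succ) :=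
        (measurable_pi_apply _).prodMk (measurable_pi_apply _)
      exact (hqm n.succ).comp hpair
    have hqi : ∀ n y, Integrable (fun x => q n x y) lam := fun n y => by
      -- a non-integrable kernel would have Bochner integral `0`, not `1`
      by_contra h
      have := hq1 n y
      rw [integral_undef h] at this
      exact zero_ne_one this
    have hI : Integrable (F ∘ e) (lam.prod (Measure.pi fun _ : Fin (N + 1) => lam)) := by
      rw [hFe]
      refine (integrable_prod_iff' ?_).2 ⟨?_, ?_⟩
      · refine (Measurable.mul ?_ (hGm.comp measurable_snd)).aestronglyMeasurable
        exact (hqm 0).comp (measurable_fst.prodMk ((measurable_pi_apply _).comp measurable_snd))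
      · exact Filter.Eventually.of_forall fun y => (hqi 0 (y 0)).mul_const (G y)
      · have : ∀ y : Fin (N + 1) → E, ∫ x, ‖q 0 x (y 0) * G y‖ ∂lam = ‖G y‖ := fun y => by
          simp_rw [norm_mul, Real.norm_of_nonneg (hqpos 0 _ _).le]
          rw [integral_mul_const, hq1, one_mul]
        simp_rw [this]
        exact ihI.norm
    refine ⟨(hmp.integrable_comp_emb e.measurableEmbedding).1 hI, ?_⟩
    rw [← hmp.integral_comp e.measurableEmbedding F]
    change ∫ z, (F ∘ e) z ∂(lam.prod (Measure.pi fun _ : Fin (N + 1) => lam)) = _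
    rw [integral_prod_symm _ hI, hFe, ← ihE]
    refine integral_congr_ae (Filter.Eventually.of_forall fun y => ?_)
    change ∫ x, q 0 x (y 0) * G y ∂lam = G y
    rw [integral_mul_const, hq1, one_mul]

/-- The weights turn the forward joint density into the backward one. Here `a n`, `b n`, `c n`
stand for the values of `π n`, `q n`, `p n` along a fixed path. -/
lemma ais_telescope (N : ℕ) (a : Fin (N + 1) → ℝ) (b c : Fin N → ℝ)
    (ha : ∀ n, a n ≠ 0) (hc : ∀ n, c n ≠ 0) :
    (∏ n : Fin N, a n.succ * b n / (a n.castSucc * c n)) * (a 0 * ∏ n, c n)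
      = a (Fin.last N) * ∏ n, b n := by
  have h : a 0 * ∏ n : Fin N, a n.succ = (∏ n : Fin N, a n.castSucc) * a (Fin.last N) := by
    rw [← Fin.prod_univ_succ, Fin.prod_univ_castSucc]
  have h1 : ∏ n : Fin N, a n.castSucc ≠ 0 := Finset.prod_ne_zero_iff.2 fun n _ => ha _
  have h2 : ∏ n : Fin N, c n ≠ 0 := Finset.prod_ne_zero_iff.2 fun n _ => hc _
  rw [Finset.prod_div_distrib, Finset.prod_mul_distrib, Finset.prod_mul_distrib, div_mul_eq_mul_div,
    div_eq_iff (mul_ne_zero h1 h2)]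
  linear_combination (∏ n, b n) * (∏ n, c n) * h


/-- Unbiasedness of annealed importance sampling: let `lam` be a σ-finite reference
measure, `π 0, …, π N` strictly positive probability densities (prior to target),
`p n` forward and `q n` backward strictly positive transition probability densities.
With incremental weights
`w_n(x_{n−1}, x_n) = π_n(x_n)·q_n(x_{n−1}|x_n) / (π_{n−1}(x_{n−1})·p_n(x_n|x_{n−1}))`,
for every bounded measurable `φ`, integrating `φ(x_N) · ∏ w_n` against the forward
joint density `π_0(x_0)·∏ p_n(x_n|x_{n−1})` over `lam^{⊗(N+1)}` yields `∫ φ·π_N dlam`.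
Here `p n x y` is the density of moving forward from `x` to `y`, and `q n x y` the
backward density of `x` given `y`. -/
theorem ais_unbiased {E : Type*} [MeasurableSpace E] (lam : Measure E) [SigmaFinite lam]
    (N : ℕ) (hN : 1 ≤ N)
    (π : Fin (N + 1) → E → ℝ) (hπm : ∀ n, Measurable (π n))
    (hπpos : ∀ n x, 0 < π n x) (hπ1 : ∀ n, ∫ x, π n x ∂lam = 1)
    (p q : Fin N → E → E → ℝ)
    (hpm : ∀ n, Measurable fun z : E × E => p n z.1 z.2)
    (hqm : ∀ n, Measurable fun z : E × E => q n z.1 z.2)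
    (hppos : ∀ n x y, 0 < p n x y) (hqpos : ∀ n x y, 0 < q n x y)
    (hp1 : ∀ n x, ∫ y, p n x y ∂lam = 1)
    (hq1 : ∀ n y, ∫ x, q n x y ∂lam = 1)
    (φ : E → ℝ) (hφm : Measurable φ) (Cb : ℝ) (hφb : ∀ y, |φ y| ≤ Cb) :
    ∫ x : Fin (N + 1) → E,
        φ (x (Fin.last N)) *
          (∏ n : Fin N,
            π n.succ (x n.succ) * q n (x n.castSucc) (x n.succ) /
              (π n.castSucc (x n.castSucc) * p n (x n.castSucc) (x n.succ))) *
          (π 0 (x 0) * ∏ n : Fin N, p n (x n.castSucc) (x n.succ))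
        ∂(Measure.pi fun _ : Fin (N + 1) => lam)
      = ∫ y, φ y * π (Fin.last N) y ∂lam := by
  have hπi : Integrable (π (Fin.last N)) lam := by
    by_contra h
    have := hπ1 (Fin.last N)
    rw [integral_undef h] at this
    exact zero_ne_one this
  have hg : Integrable (fun y => φ y * π (Fin.last N) y) lam :=
    hπi.bdd_mul hφm.aestronglyMeasurable (Filter.Eventually.of_forall hφb)
  rw [← (backward_chain lam (fun y => φ y * π (Fin.last N) y) (hφm.mul (hπm _)) hg N q
    hqm hqpos hq1).2]
  congr 1
  funext x
  rw [mul_assoc, ais_telescope N (fun n => π n (x n)) (fun n => q n (x n.castSucc) (x n.succ))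
    (fun n => p n (x n.castSucc) (x n.succ)) (fun n => (hπpos _ _).ne')
    (fun n => (hppos _ _ _).ne'),
    mul_assoc]
end
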